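/- arXiv:0911.4050 — 6 statements merged into one kernel-verified Lean document; each statement's English description precedes it below -/
import Mathlib

section
/- Let R be a commutative ring, σ a type, and t : σ → R. Then the pre-crossed module (R⁺[σ], R, ∂) given by the augmentation ideal of MvPolynomial σ R with boundary the restriction of aeval t is the free pre-crossed module on t: for every pre-crossed module δ : C → R and every function ν : σ → C with δ(ν i) = t i for all i ∈ σ, there exists a unique map φ : R⁺[σ] → C that is additive, multiplicative, and R-linear, satisfies φ(X i) = ν i for all i ∈ σ, and satisfies δ ∘ φ = ∂. -/
open MvPolynomial

/-- The augmentation ideal `R⁺[σ]` of the polynomial algebra `MvPolynomial σ R`,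
i.e. the kernel of the constant-coefficient map. -/
noncomputable def aug (R : Type*) [CommRing R] (σ : Type*) : Ideal (MvPolynomial σ R) :=
  RingHom.ker (constantCoeff : MvPolynomial σ R →+* R)

/-- The augmentation ideal is closed under multiplication. -/
noncomputable instance {R : Type*} [CommRing R] {σ : Type*} : Mul (aug R σ) :=
  ⟨fun a b => ⟨a.1 * b.1, Ideal.mul_mem_left _ _ b.2⟩⟩

/-- The variable `X i` as an element of the augmentation ideal. -/
noncomputable def XinAug {R : Type*} [CommRing R] {σ : Type*} (i : σ) : aug R σ :=
  ⟨X i, by simp [aug, RingHom.mem_ker]⟩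

/-- The pre-crossed module `(R⁺[σ], R, ∂)`, with `∂` the restriction of
`aeval t` to the augmentation ideal, is the *free pre-crossed module* on `t : σ → R`:
for every pre-crossed module `δ : C → R` and every `ν : σ → C` with `δ (ν i) = t i`,
there is a unique additive, multiplicative, `R`-linear map `φ : R⁺[σ] → C` with
`φ (X i) = ν i` and `δ ∘ φ = ∂`. -/
theorem aug_free_preCrossedModule
    {R : Type*} [CommRing R] {σ : Type*} (t : σ → R)
    {C : Type*} [NonUnitalCommRing C] [Module R C]
    (hact : ∀ (r : R) (c c' : C), r • (c * c') = (r • c) * c')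
    (δ : C → R)
    (hadd : ∀ c c' : C, δ (c + c') = δ c + δ c')
    (hmul : ∀ c c' : C, δ (c * c') = δ c * δ c')
    (hCM1 : ∀ (r : R) (c : C), δ (r • c) = r * δ c)
    (ν : σ → C) (hν : ∀ i : σ, δ (ν i) = t i) :
    ∃! φ : aug R σ → C,
      (∀ p q : aug R σ, φ (p + q) = φ p + φ q) ∧
      (∀ p q : aug R σ, φ (p * q) = φ p * φ q) ∧
      (∀ (r : R) (p : aug R σ), φ (r • p) = r • φ p) ∧
      (∀ i : σ, φ (XinAug i) = ν i) ∧
      (∀ p : aug R σ, δ (φ p) = aeval t (p : MvPolynomial σ R)) := by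
  have : IsScalarTower R C C := ⟨fun r c c' => by
    simp only [smul_eq_mul]; exact (hact r c c').symm⟩
  have : SMulCommClass R C C := ⟨fun r c c' => by
    simp only [smul_eq_mul]; rw [mul_comm, hact, mul_comm]⟩
  let F : MvPolynomial σ R →ₐ[R] Unitization R C :=
    aeval (fun i => (Unitization.inr (ν i) : Unitization R C))
  have hFX : ∀ i, F (X i) = Unitization.inr (ν i) := fun i => by simp [F]
  have hFC : ∀ r, F (MvPolynomial.C r) = Unitization.inl r := fun r => by
    rw [← algebraMap_eq, AlgHom.commutes, Unitization.algebraMap_eq_inl]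
  have hfst : ∀ p, (F p).fst = constantCoeff p := by
    intro p
    induction p using MvPolynomial.induction_on with
    | C r => simp [Unitization.algebraMap_eq_inl]
    | add p q hp hq => simp [hp, hq]
    | mul_X p i hp => simp [hFX]
  have hδ0 : δ 0 = 0 := by simpa using hCM1 0 0
  have hδ : ∀ p, constantCoeff p + δ (F p).snd = aeval t p := by
    intro p
    induction p using MvPolynomial.induction_on with
    | C r => simp [Unitization.algebraMap_eq_inl, hδ0]
    | add p q hp hq => rw [map_add, map_add, map_add, Unitization.snd_add, hadd, ← hp, ← hq]; ring
    | mul_X p i hp =>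
      rw [map_mul, map_mul, map_mul, Unitization.snd_mul, hFX, hfst, ← hp]
      simp [hadd, hmul, hCM1, hν, hδ0]
      ring
  have h0 : ∀ p : aug R σ, constantCoeff (p : MvPolynomial σ R) = 0 := fun p => p.2
  refine ⟨fun p => (F p).snd, ⟨?_, ?_, ?_, ?_, ?_⟩, ?_⟩
  · intro p q
    simp
  · intro p q
    change (F ((p : MvPolynomial σ R) * q)).snd = _
    rw [map_mul, Unitization.snd_mul, hfst, hfst, h0, h0]
    simp
  · intro r p
    simp
  · intro i
    change (F (X i)).snd = _
    simp [hFX]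
  · intro p
    rw [← hδ, h0, zero_add]
  · rintro φ ⟨ha, hm, hs, hx, -⟩
    have hz : φ 0 = 0 := by simpa using hs 0 0
    have key : ∀ p : MvPolynomial σ R, ∀ q : aug R σ,
        (q : MvPolynomial σ R) = p - MvPolynomial.C (constantCoeff p) → φ q = (F p).snd := by
      intro p
      induction p using MvPolynomial.induction_on with
      | C r =>
        intro q hq
        have : q = 0 := Subtype.ext (by simpa using hq)
        simp [this, hz, Unitization.algebraMap_eq_inl]
      | add p p' hp hp' =>
        intro q hq
        let a : aug R σ := ⟨p - MvPolynomial.C (constantCoeff p), by simp [aug, RingHom.mem_ker]⟩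
        let b : aug R σ := ⟨p' - MvPolynomial.C (constantCoeff p'), by simp [aug, RingHom.mem_ker]⟩
        have : q = a + b := Subtype.ext (by
          rw [hq, Submodule.coe_add]; simp only [a, b, map_add]; ring)
        rw [this, ha, hp a rfl, hp' b rfl, map_add, Unitization.snd_add]
      | mul_X p i hp =>
        intro q hq
        let a : aug R σ := ⟨p - MvPolynomial.C (constantCoeff p), by simp [aug, RingHom.mem_ker]⟩
        have : q = a * XinAug i + constantCoeff p • XinAug i := Subtype.ext (by
          change (q : MvPolynomial σ R)
            = (p - MvPolynomial.C (constantCoeff p)) * X i + constantCoeff p • X i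
          rw [hq, smul_eq_C_mul]; simp only [map_mul, constantCoeff_X, mul_zero, map_zero]; ring)
        rw [this, ha, hm, hs, hx, hp a rfl, map_mul, Unitization.snd_mul, hFX, hfst]
        simp [add_comm]
    funext p
    exact key p p (by rw [h0]; simp)
end

section
/- Let R be a commutative ring, σ a type, t : σ → R, and let P₁ be the Peiffer ideal of the pre-crossed module (R⁺[σ], R, ∂), i.e. the R-submodule of R⁺[σ] generated by the elements p * q − C(aeval t p) * q for p, q ∈ R⁺[σ]. Then the quotient R⁺[σ]/P₁ with the induced boundary ∂̄ : R⁺[σ]/P₁ → R is the free crossed module on t: for every crossed module δ : C → R and every function ν : σ → C with δ(ν i) = t i for all i ∈ σ, there exists a unique map φ : R⁺[σ]/P₁ → C that is additive, multiplicative, and R-linear, satisfies φ(X i + P₁) = ν i for all i ∈ σ, and satisfies δ ∘ φ = ∂̄. -/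
open MvPolynomial

/-- The Peiffer ideal `P₁` of the pre-crossed module `∂ : R⁺[σ] → R` (with `∂` the
restriction of `aeval t`): the `R`-submodule of `R⁺[σ]` generated by the Peiffer elements
`p * q - C (aeval t p) * q` for `p, q ∈ R⁺[σ]`.  (Here `r • q = C r * q`.) -/
noncomputable def peifferIdeal {R : Type*} [CommRing R] {σ : Type*} (t : σ → R) :
    Submodule R (aug R σ) :=
  Submodule.span R
    {z : aug R σ | ∃ p q : aug R σ, z = p * q - (aeval t (p : MvPolynomial σ R)) • q}

theorem aug_hom_ext {R : Type*} [CommRing R] {σ : Type*} {C : Type*} [NonUnitalCommRing C]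
    [Module R C] (f g : aug R σ →ₗ[R] C)
    (hf : ∀ p q : aug R σ, f (p * q) = f p * f q)
    (hg : ∀ p q : aug R σ, g (p * q) = g p * g q)
    (hX : ∀ i : σ, f (XinAug i) = g (XinAug i)) : f = g := by
  have hmem : ∀ p : MvPolynomial σ R, p - MvPolynomial.C (constantCoeff p) ∈ aug R σ := by
    intro p
    simp [aug, RingHom.mem_ker]
  have key : ∀ p : MvPolynomial σ R, f ⟨_, hmem p⟩ = g ⟨_, hmem p⟩ := by
    intro p
    induction p using MvPolynomial.induction_on with
    | C a =>
      have : (⟨_, hmem (MvPolynomial.C a)⟩ : aug R σ) = 0 := by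
        ext1
        simp
      rw [this, map_zero, map_zero]
    | add p q hp hq =>
      have : (⟨_, hmem (p + q)⟩ : aug R σ) = ⟨_, hmem p⟩ + ⟨_, hmem q⟩ := by
        apply Subtype.ext
        change _ = (p - MvPolynomial.C (constantCoeff p)) + (q - MvPolynomial.C (constantCoeff q))
        simp only [map_add]
        ring
      rw [this, map_add, map_add, hp, hq]
    | mul_X p i hp =>
      have : (⟨_, hmem (p * X i)⟩ : aug R σ)
          = ⟨_, hmem p⟩ * XinAug i + constantCoeff p • XinAug i := by
        apply Subtype.ext
        change _ = (p - MvPolynomial.C (constantCoeff p)) * X i + constantCoeff p • X i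
        rw [MvPolynomial.smul_eq_C_mul]
        simp only [map_mul, constantCoeff_X, mul_zero, map_zero]
        ring
      rw [this, map_add, map_add, hf, hg, map_smul, map_smul, hX, hp]
  apply LinearMap.ext
  intro p
  have h : (⟨_, hmem p.1⟩ : aug R σ) = p := by
    apply Subtype.ext
    have h0 : constantCoeff p.1 = 0 := p.2
    simp [h0]
  rw [← h]
  exact key p.1

/-- The quotient `R⁺[σ]/P₁` of the augmentation ideal by the Peiffer ideal,
with the induced boundary `∂̄`, is the *free crossed module* on `t : σ → R`:
for every crossed module `δ : C → R` and every `ν : σ → C` with `δ (ν i) = t i`,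
there is a unique additive, multiplicative, `R`-linear map `φ : R⁺[σ]/P₁ → C` with
`φ (X i + P₁) = ν i` and `δ ∘ φ = ∂̄`. -/
theorem augQuotient_free_crossedModule
    {R : Type*} [CommRing R] {σ : Type*} (t : σ → R)
    {C : Type*} [NonUnitalCommRing C] [Module R C]
    (hact : ∀ (r : R) (c c' : C), r • (c * c') = (r • c) * c')
    (δ : C → R)
    (hadd : ∀ c c' : C, δ (c + c') = δ c + δ c')
    (hmul : ∀ c c' : C, δ (c * c') = δ c * δ c')
    (hCM1 : ∀ (r : R) (c : C), δ (r • c) = r * δ c)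
    (hCM2 : ∀ c c' : C, δ c • c' = c * c')
    (ν : σ → C) (hν : ∀ i : σ, δ (ν i) = t i) :
    ∃! φ : (aug R σ ⧸ peifferIdeal t) → C,
      (∀ a b : aug R σ ⧸ peifferIdeal t, φ (a + b) = φ a + φ b) ∧
      (∀ p q : aug R σ, φ (Submodule.Quotient.mk (p * q))
          = φ (Submodule.Quotient.mk p) * φ (Submodule.Quotient.mk q)) ∧
      (∀ (r : R) (a : aug R σ ⧸ peifferIdeal t), φ (r • a) = r • φ a) ∧
      (∀ i : σ, φ (Submodule.Quotient.mk (XinAug i)) = ν i) ∧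
      (∀ p : aug R σ, δ (φ (Submodule.Quotient.mk p)) = aeval t (p : MvPolynomial σ R)) := by
  have : IsScalarTower R C C := ⟨fun r c c' => by
    simp only [smul_eq_mul]; exact (hact r c c').symm⟩
  have : SMulCommClass R C C := ⟨fun r c c' => by
    simp only [smul_eq_mul]; rw [mul_comm c, hact, mul_comm c]⟩
  let F : MvPolynomial σ R →ₐ[R] Unitization R C := aeval (fun i => (Unitization.inr (ν i)))
  have hfst : ∀ p : MvPolynomial σ R, (F p).fst = constantCoeff p := by
    intro p
    have : ((Unitization.fstHom R C : Unitization R C →ₐ[R] R).comp F).toRingHom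
        = (constantCoeff : MvPolynomial σ R →+* R) := by
      apply MvPolynomial.ringHom_ext
      · intro r
        simp [F, Unitization.fstHom]
      · intro i
        change (F (X i)).fst = _
        simp [F]
    exact congrArg (fun h : MvPolynomial σ R →+* R => h p) this
  have hfst0 : ∀ p : aug R σ, (F p.1).fst = 0 := fun p => (hfst p.1).trans p.2
  let φ0 : aug R σ →ₗ[R] C :=
    { toFun := fun p => (F p.1).snd
      map_add' := fun p q => by
        change (F (p.1 + q.1)).snd = _
        simp
      map_smul' := fun r p => by
        change (F (r • p.1)).snd = _
        simp }
  have hφmul : ∀ p q : aug R σ, φ0 (p * q) = φ0 p * φ0 q := by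
    intro p q
    change (F (p.1 * q.1)).snd = (F p.1).snd * (F q.1).snd
    rw [map_mul, Unitization.snd_mul, hfst0, hfst0]
    simp
  have hφX : ∀ i, φ0 (XinAug i) = ν i := by
    intro i
    change (F (X i)).snd = ν i
    simp [F]
  let d : C →ₙₐ[R] R :=
    { toFun := δ
      map_smul' := fun r c => by simpa using hCM1 r c
      map_zero' := by simpa using hCM1 0 0
      map_add' := hadd
      map_mul' := hmul }
  have hδ : ∀ p : aug R σ, δ (φ0 p) = aeval t (p : MvPolynomial σ R) := by
    intro p
    have h : (Unitization.lift d).comp F = aeval t := by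
      apply MvPolynomial.algHom_ext
      intro i
      simp [F, d, hν]
    rw [← h]
    change d (F p.1).snd = Unitization.lift d (F p.1)
    have e : F p.1 = Unitization.inr (F p.1).snd := by
      apply Unitization.ext
      · rw [hfst0, Unitization.fst_inr]
      · rw [Unitization.snd_inr]
    rw [e]
    simp
  have hP : peifferIdeal t ≤ LinearMap.ker φ0 := by
    refine Submodule.span_le.mpr ?_
    rintro z ⟨p, q, rfl⟩
    change φ0 _ = 0
    rw [map_sub, map_smul, hφmul, ← hδ, hCM2, sub_self]
  refine ⟨(peifferIdeal t).liftQ φ0 hP, ⟨fun a b => map_add _ a b, hφmul,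
    fun r a => map_smul _ r a, hφX, hδ⟩, ?_⟩
  rintro ψ ⟨h1, h2, h3, h4, -⟩
  let ψl : (aug R σ ⧸ peifferIdeal t) →ₗ[R] C :=
    { toFun := ψ, map_add' := h1, map_smul' := h3 }
  have he : ψl.comp (peifferIdeal t).mkQ = φ0 :=
    aug_hom_ext _ _ h2 hφmul (fun i => (h4 i).trans (hφX i).symm)
  funext a
  obtain ⟨p, rfl⟩ := Submodule.Quotient.mk_surjective _ a
  exact congrArg (fun f : aug R σ →ₗ[R] C => f p) he
end

section
/- Let R be a commutative ring, n a natural number, and t : Fin n → R. Let M = ker(constantCoeff : MvPolynomial (Fin n) R → R) be the augmentation ideal and let P₁ be the R-submodule of M generated by the Peiffer elements p * q − C(aeval t p) * q for p, q ∈ M. Then every element of M is congruent modulo P₁ to a linear polynomial: for every m ∈ M there exists r : Fin n → R such that m − ∑_{i} C(r i) * X i ∈ P₁. -/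
open MvPolynomial

/-- Let `M` be the augmentation ideal of `MvPolynomial (Fin n) R` and let
`P₁` be the `R`-submodule of `M` generated by the Peiffer elements
`p * q - C (aeval t p) * q` for `p, q ∈ M`.  Then every element of `M` is congruent modulo
`P₁` to a linear polynomial: for every `m ∈ M` there is `r : Fin n → R` with
`m - ∑ i, C (r i) * X i ∈ P₁`. -/
theorem linear_representative_mod_peiffer
    {R : Type*} [CommRing R] (n : ℕ) (t : Fin n → R)
    (P₁ : Submodule R (MvPolynomial (Fin n) R))
    (hP₁ : P₁ = Submodule.span R
      {z : MvPolynomial (Fin n) R | ∃ p q : MvPolynomial (Fin n) R,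
        constantCoeff p = 0 ∧ constantCoeff q = 0 ∧ z = p * q - C (aeval t p) * q}) :
    ∀ m : MvPolynomial (Fin n) R, constantCoeff m = 0 →
      ∃ r : Fin n → R, m - ∑ i : Fin n, C (r i) * X i ∈ P₁ := by
  have key : ∀ m : MvPolynomial (Fin n) R,
      ∃ r : Fin n → R, m - C (constantCoeff m) - ∑ i : Fin n, C (r i) * X i ∈ P₁ := by
    intro m
    induction m using MvPolynomial.induction_on with
    | C a => exact ⟨0, by simp⟩
    | add p q hp hq =>
      obtain ⟨r, hr⟩ := hp
      obtain ⟨s, hs⟩ := hq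
      refine ⟨r + s, ?_⟩
      have h := P₁.add_mem hr hs
      convert h using 1
      simp only [map_add, Pi.add_apply, add_mul, Finset.sum_add_distrib]
      ring
    | mul_X p i _ =>
      refine ⟨Pi.single i (aeval t p), ?_⟩
      have hsum : ∑ j : Fin n, C ((Pi.single i (aeval t p) : Fin n → R) j) * X j
          = C (aeval t p) * (X i : MvPolynomial (Fin n) R) := by
        rw [Finset.sum_eq_single i]
        · simp
        · intro j _ hj
          simp [Pi.single_eq_of_ne hj]
        · simp
      rw [hsum, hP₁]
      apply Submodule.subset_span
      refine ⟨p - C (constantCoeff p), X i, by simp, by simp, ?_⟩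
      have h1 : aeval t (p - C (constantCoeff p)) = aeval t p - constantCoeff p := by
        rw [map_sub, aeval_C]
        rfl
      have h2 : constantCoeff (p * X i) = 0 := by simp
      rw [h1, h2, map_sub, map_zero]
      ring
  intro m hm
  obtain ⟨r, hr⟩ := key m
  exact ⟨r, by simpa [hm] using hr⟩
end

section
/- Let R be a commutative ring, n a natural number, and t : Fin n → R. Let M = ker(constantCoeff : MvPolynomial (Fin n) R → R), let P₁ be the R-submodule of M generated by the Peiffer elements p * q − C(aeval t p) * q (p, q ∈ M), and let K be the R-submodule of Fin n → R generated by the elements t i • e j − t j • e i for i, j ∈ Fin n, where e i denotes the i-th standard basis vector Pi.single i 1. Then there is an R-module isomorphism M/P₁ ≅ (Fin n → R)/K sending the class of X i to the class of e i; moreover, under this isomorphism the map M/P₁ → R induced by aeval t corresponds to the map (Fin n → R)/K → R induced by r ↦ ∑_{i} r i * t i. -/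
open MvPolynomial

/-- The Koszul-type relation submodule `K` of `Fin n → R`, generated by the elements
`t i • e j - t j • e i` where `e i = Pi.single i 1`. -/
noncomputable def koszulRel {R : Type*} [CommRing R] {n : ℕ} (t : Fin n → R) :
    Submodule R (Fin n → R) :=
  Submodule.span R
    {z : Fin n → R | ∃ i j : Fin n, z = t i • (Pi.single j 1 : Fin n → R) - t j • (Pi.single i 1 : Fin n → R)}

theorem aux_exists_sum {R : Type*} [CommRing R] {n : ℕ} (p : MvPolynomial (Fin n) R)
    (hp : p ∈ aug R (Fin n)) : ∃ c : Fin n → MvPolynomial (Fin n) R, p = ∑ i, c i * X i := by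
  have h : p ∈ Ideal.span (Set.range (X : Fin n → MvPolynomial (Fin n) R)) := by
    rw [← Set.image_univ, mem_ideal_span_X_image]
    intro m hm
    by_contra hcon
    push Not at hcon
    have : m = 0 := by
      ext i
      simpa using hcon i (Set.mem_univ i)
    subst this
    rw [mem_support_iff] at hm
    exact hm hp
  obtain ⟨c, hc⟩ := (Ideal.mem_span_range_iff_exists_fun).1 h
  exact ⟨c, hc.symm⟩

theorem aux_koszul {R : Type*} [CommRing R] {n : ℕ} (t : Fin n → R) (i j : Fin n) :
    t i • (koszulRel t).mkQ (Pi.single j 1) = t j • (koszulRel t).mkQ (Pi.single i 1) := by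
  rw [← sub_eq_zero, ← map_smul, ← map_smul, ← map_sub, Submodule.mkQ_apply,
    Submodule.Quotient.mk_eq_zero]
  exact Submodule.subset_span ⟨i, j, rfl⟩

theorem aux_exists_map {R : Type*} [CommRing R] {n : ℕ} (t : Fin n → R) :
    ∃ f : MvPolynomial (Fin n) R →ₗ[R] ((Fin n → R) ⧸ koszulRel t),
      ∀ (p : MvPolynomial (Fin n) R) (i : Fin n),
        f (p * X i) = aeval t p • (koszulRel t).mkQ (Pi.single i 1) := by
  classical
  let F : (Fin n →₀ ℕ) → ((Fin n → R) ⧸ koszulRel t) := fun m =>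
    if h : ∃ i, m i ≠ 0 then
      aeval t (monomial (m - Finsupp.single h.choose 1) (1 : R)) •
        (koszulRel t).mkQ (Pi.single h.choose 1)
    else 0
  have hF : ∀ (m : Fin n →₀ ℕ) (i : Fin n), F (m + Finsupp.single i 1) =
      aeval t (monomial m (1 : R)) • (koszulRel t).mkQ (Pi.single i 1) := by
    intro m i
    have h : ∃ j, (m + Finsupp.single i 1 : Fin n →₀ ℕ) j ≠ 0 := ⟨i, by simp⟩
    simp only [F]
    rw [dif_pos h]
    have hj := h.choose_spec
    generalize h.choose = j at hj ⊢
    by_cases hij : j = i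
    · subst hij
      simp
    · have hmj : m j ≠ 0 := by
        simpa [Finsupp.single_apply, Ne.symm hij] using hj
      obtain ⟨m', rfl⟩ : ∃ m', m = m' + Finsupp.single j 1 := by
        refine ⟨m - Finsupp.single j 1, ?_⟩
        ext k
        by_cases hk : j = k
        · subst hk
          simp
          omega
        · simp [hk]
      have e : m' + Finsupp.single j 1 + Finsupp.single i 1 - Finsupp.single j 1
          = m' + Finsupp.single i 1 := by
        rw [add_right_comm, add_tsub_cancel_right]
      have key : ∀ k, aeval t (monomial (m' + Finsupp.single k 1) (1 : R))
          = aeval t (monomial m' (1 : R)) * t k := by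
        intro k
        rw [monomial_add_single, map_mul]
        simp
      rw [e, key, key, mul_smul, mul_smul, aux_koszul]
  refine ⟨(basisMonomials (Fin n) R).constr R F, fun p i => ?_⟩
  induction p using MvPolynomial.induction_on' with
  | monomial m a =>
    have h1 : monomial m a * X i
        = a • basisMonomials (Fin n) R (m + Finsupp.single i 1) := by
      simp [X, monomial_mul, smul_monomial]
    have h2 : monomial m a = a • monomial m (1 : R) := by
      simp [smul_monomial]
    rw [h1, map_smul, Module.Basis.constr_basis, hF, h2, map_smul, smul_assoc]
  | add p q hp hq => rw [add_mul, map_add, hp, hq, map_add, add_smul]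

theorem aux_smul_coe {R : Type*} [CommRing R] {σ : Type*} (r : R) (q : aug R σ) :
    ((r • q : aug R σ) : MvPolynomial σ R) = r • (q : MvPolynomial σ R) := rfl

theorem aux_mul_coe {R : Type*} [CommRing R] {σ : Type*} (p q : aug R σ) :
    ((p * q : aug R σ) : MvPolynomial σ R) = p.1 * q.1 := rfl

theorem aux_peiffer {R : Type*} [CommRing R] {n : ℕ} (t : Fin n → R) (p q : aug R (Fin n)) :
    (peifferIdeal t).mkQ (p * q) = aeval t p.1 • (peifferIdeal t).mkQ q := by
  rw [← sub_eq_zero, ← map_smul, ← map_sub, Submodule.mkQ_apply,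
    Submodule.Quotient.mk_eq_zero]
  exact Submodule.subset_span ⟨p, q, rfl⟩

theorem aux_peiffer_full {R : Type*} [CommRing R] {n : ℕ} (t : Fin n → R)
    (c : MvPolynomial (Fin n) R) (q : aug R (Fin n)) :
    (peifferIdeal t).mkQ (c • q) = aeval t c • (peifferIdeal t).mkQ q := by
  have hc : c - C (constantCoeff c) ∈ aug R (Fin n) := by
    simp [aug, RingHom.mem_ker]
  have e : c • q = (⟨_, hc⟩ : aug R (Fin n)) * q + constantCoeff c • q := by
    apply Subtype.ext
    rw [Submodule.coe_add, aux_mul_coe, aux_smul_coe, smul_eq_C_mul]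
    simp only [Submodule.coe_smul, smul_eq_mul]
    ring
  rw [e, map_add, aux_peiffer, map_smul, ← add_smul]
  simp

/-- There is an `R`-module isomorphism `M/P₁ ≅ (Fin n → R)/K` sending the
class of `X i` to the class of `e i`; moreover, under this isomorphism the map `M/P₁ → R`
induced by `aeval t` corresponds to the map `(Fin n → R)/K → R` induced by
`r ↦ ∑ i, r i * t i`.  (Porter's Koszul-type description of the free crossed module.) -/
theorem free_crossedModule_koszul_description
    {R : Type*} [CommRing R] (n : ℕ) (t : Fin n → R) :
    ∃ φ : (aug R (Fin n) ⧸ peifferIdeal t) ≃ₗ[R] ((Fin n → R) ⧸ koszulRel t),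
      (∀ i : Fin n, φ (Submodule.Quotient.mk (XinAug i))
          = Submodule.Quotient.mk (Pi.single i 1 : Fin n → R)) ∧
      (∀ (p : aug R (Fin n)) (x : Fin n → R),
        φ (Submodule.Quotient.mk p) = Submodule.Quotient.mk x →
          aeval t (p : MvPolynomial (Fin n) R) = ∑ i : Fin n, x i * t i) := by
  obtain ⟨f, hf⟩ := aux_exists_map t
  let f' : aug R (Fin n) →ₗ[R] ((Fin n → R) ⧸ koszulRel t) :=
    f ∘ₗ (aug R (Fin n)).subtype.restrictScalars R
  have hf' : ∀ p : aug R (Fin n), f' p = f p.1 := fun _ => rfl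
  have hmul : ∀ p q : aug R (Fin n), f' (p * q) = aeval t p.1 • f' q := by
    intro p q
    obtain ⟨c, hc⟩ := aux_exists_sum q.1 q.2
    rw [hf', hf', aux_mul_coe, hc, Finset.mul_sum, map_sum, map_sum, Finset.smul_sum]
    refine Finset.sum_congr rfl fun i _ => ?_
    rw [← mul_assoc, hf, hf, map_mul, mul_smul]
  have hfX : ∀ i, f' (XinAug i) = (koszulRel t).mkQ (Pi.single i 1) := by
    intro i
    have := hf 1 i
    rw [one_mul, map_one, one_smul] at this
    exact this
  have hP : peifferIdeal t ≤ LinearMap.ker f' := by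
    refine Submodule.span_le.2 ?_
    rintro _ ⟨p, q, rfl⟩
    rw [SetLike.mem_coe, LinearMap.mem_ker, map_sub, map_smul, hmul, sub_self]
  let Φ := (peifferIdeal t).liftQ f' hP
  have hΦ : ∀ p, Φ ((peifferIdeal t).mkQ p) = f' p := fun p => rfl
  let g' : (Fin n → R) →ₗ[R] (aug R (Fin n) ⧸ peifferIdeal t) :=
    (Pi.basisFun R (Fin n)).constr R (fun i => (peifferIdeal t).mkQ (XinAug i))
  have hg' : ∀ i, g' (Pi.single i 1) = (peifferIdeal t).mkQ (XinAug i) := by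
    intro i
    have := (Pi.basisFun R (Fin n)).constr_basis R
      (fun i => (peifferIdeal t).mkQ (XinAug i)) i
    rwa [Pi.basisFun_apply] at this
  have hK : koszulRel t ≤ LinearMap.ker g' := by
    refine Submodule.span_le.2 ?_
    rintro _ ⟨i, j, rfl⟩
    have hX : ∀ i, aeval t (XinAug (R := R) i).1 = t i := fun i => aeval_X t i
    rw [SetLike.mem_coe, LinearMap.mem_ker, map_sub, map_smul, map_smul, hg', hg', sub_eq_zero]
    nth_rewrite 1 [← hX i]
    nth_rewrite 1 [← hX j]
    rw [← aux_peiffer, ← aux_peiffer]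
    congr 1
    exact Subtype.ext (mul_comm _ _)
  let Γ := (koszulRel t).liftQ g' hK
  have hΓ : ∀ x, Γ ((koszulRel t).mkQ x) = g' x := fun x => rfl
  have h1 : Φ ∘ₗ Γ = LinearMap.id := by
    apply Submodule.linearMap_qext
    apply (Pi.basisFun R (Fin n)).ext
    intro i
    rw [Pi.basisFun_apply]
    simp only [LinearMap.comp_apply, LinearMap.id_apply]
    rw [hΓ, hg', hΦ, hfX]
  have h2 : Γ ∘ₗ Φ = LinearMap.id := by
    apply Submodule.linearMap_qext
    ext q
    simp only [LinearMap.comp_apply, LinearMap.id_apply]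
    obtain ⟨c, hc⟩ := aux_exists_sum q.1 q.2
    have hq : q = ∑ i, c i • XinAug i := by
      apply Subtype.ext
      rw [hc, Submodule.coe_sum]
      rfl
    rw [hΦ, hf', hc, map_sum, map_sum, hq, map_sum]
    refine Finset.sum_congr rfl fun i _ => ?_
    rw [hf, map_smul, hΓ, hg', aux_peiffer_full]
  let θ : (Fin n → R) →ₗ[R] R := Fintype.linearCombination R t
  have hθ : ∀ x, θ x = ∑ i, x i * t i := fun x => rfl
  have hθs : ∀ i, θ (Pi.single i 1) = t i := by
    intro i
    simp [θ]
  have hθK : koszulRel t ≤ LinearMap.ker θ := by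
    refine Submodule.span_le.2 ?_
    rintro _ ⟨i, j, rfl⟩
    rw [SetLike.mem_coe, LinearMap.mem_ker, map_sub, map_smul, map_smul, hθs, hθs, smul_eq_mul,
      smul_eq_mul, mul_comm, sub_self]
  let Θ := (koszulRel t).liftQ θ hθK
  have hΘ : ∀ x, Θ ((koszulRel t).mkQ x) = θ x := fun x => rfl
  refine ⟨LinearEquiv.ofLinearMap Φ Γ h1 h2, fun i => hfX i, fun p x hpx => ?_⟩
  have hpx' : f p.1 = (koszulRel t).mkQ x := hpx
  rw [← hθ, ← hΘ, ← hpx']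
  obtain ⟨c, hc⟩ := aux_exists_sum p.1 p.2
  rw [hc, map_sum, map_sum, map_sum]
  refine Finset.sum_congr rfl fun i _ => ?_
  rw [hf, map_smul, hΘ, hθs, map_mul, aeval_X, smul_eq_mul]
end

section
/- Let R be a commutative ring, n a natural number, and t : Fin n → R. Let K be the R-submodule of Fin n → R generated by the elements t i • e j − t j • e i for i, j ∈ Fin n, where e i = Pi.single i 1. If x : Fin n → R satisfies ∑_{i} x i * t i = 0, then t j • x ∈ K for every j ∈ Fin n. Consequently the kernel of the map (Fin n → R)/K → R induced by r ↦ ∑_{i} r i * t i is annihilated by the ideal of R generated by the t i, i.e. it is a module over B = R/(t₁, …, tₙ). -/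
/-- Let `K` be the `R`-submodule of `Fin n → R` generated by the elements
`t i • e j - t j • e i` (with `e i = Pi.single i 1`).  If `x : Fin n → R` satisfies
`∑ i, x i * t i = 0`, then `t j • x ∈ K` for every `j`.  Consequently the kernel of the map
`(Fin n → R)/K → R` induced by `r ↦ ∑ i, r i * t i` is annihilated by the ideal of `R`
generated by the `t i`, i.e. it is a module over `B = R/(t₁, …, tₙ)`. -/
theorem koszul_kernel_annihilated
    {R : Type*} [CommRing R] (n : ℕ) (t : Fin n → R)
    (K : Submodule R (Fin n → R))
    (hK : K = Submodule.span R
      {z : Fin n → R | ∃ i j : Fin n,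
        z = t i • (Pi.single j 1 : Fin n → R) - t j • (Pi.single i 1 : Fin n → R)}) :
    (∀ x : Fin n → R, (∑ i : Fin n, x i * t i) = 0 → ∀ j : Fin n, t j • x ∈ K) ∧
    (∀ r ∈ Ideal.span (Set.range t), ∀ x : Fin n → R, (∑ i : Fin n, x i * t i) = 0 →
      r • (Submodule.Quotient.mk x : (Fin n → R) ⧸ K) = 0) := by
  have h1 : ∀ x : Fin n → R, (∑ i : Fin n, x i * t i) = 0 → ∀ j : Fin n, t j • x ∈ K := by
    intro x hx j
    have key : t j • x = ∑ i : Fin n, x i •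
        (t j • (Pi.single i 1 : Fin n → R) - t i • (Pi.single j 1 : Fin n → R)) := by
      have e1 : ∑ i : Fin n, x i • (t j • (Pi.single i 1 : Fin n → R)) = t j • x := by
        conv_rhs => rw [pi_eq_sum_univ' x, Finset.smul_sum]
        refine Finset.sum_congr rfl fun i _ => ?_
        rw [smul_comm]
      have e2 : ∑ i : Fin n, x i • (t i • (Pi.single j 1 : Fin n → R)) = 0 := by
        simp only [smul_smul]
        rw [← Finset.sum_smul, hx, zero_smul]
      simp only [smul_sub]
      rw [Finset.sum_sub_distrib, e1, e2, sub_zero]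
    rw [key, hK]
    exact Submodule.sum_mem _ fun i _ =>
      Submodule.smul_mem _ _ (Submodule.subset_span ⟨j, i, rfl⟩)
  refine ⟨h1, fun r hr x hx => ?_⟩
  rw [← Submodule.Quotient.mk_smul, Submodule.Quotient.mk_eq_zero]
  induction hr using Submodule.span_induction with
  | mem y hy =>
    obtain ⟨j, rfl⟩ := hy
    exact h1 x hx j
  | zero => simp
  | add a b _ _ ha hb =>
    rw [add_smul]
    exact K.add_mem ha hb
  | smul a b _ hb =>
    rw [smul_assoc]
    exact K.smul_mem a hb
end

section
/- Let (M, R, ∂₁) and (N, R, ∂₂) be crossed modules of commutative algebras over a commutative ring R. Define on M × N componentwise addition, the R-action r • (m, n) = (r • m, r • n), and the multiplication (m, n) * (m', n') = (m * m', ∂₁(m) • n' + ∂₁(m') • n + n * n'). Then M × N is a non-unital commutative ring whose R-action satisfies r • (x * x') = (r • x) * x', and the map δ̄ : M × N → R defined by δ̄(m, n) = ∂₁(m) + ∂₂(n) is additive, multiplicative, and satisfies δ̄(r • x) = r * δ̄(x); that is, (M × N, R, δ̄) is a pre-crossed module (the semidirect product M ⋊ N underlying the coproduct of M and N in the category of crossed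 R-modules). -/
/-- Let `(M, R, ∂₁)` and `(N, R, ∂₂)` be crossed modules of commutative
algebras over `R`.  Equip `M × N` with componentwise addition, the `R`-action
`r • (m, n) = (r • m, r • n)`, and the multiplication
`(m, n) * (m', n') = (m m', ∂₁ m • n' + ∂₁ m' • n + n n')`.  Then `M × N` is a non-unital
commutative ring whose `R`-action satisfies `r • (x * x') = (r • x) * x'`, and
`δ̄ (m, n) = ∂₁ m + ∂₂ n` is additive, multiplicative and satisfies (CM1); i.e.
`(M × N, R, δ̄)` is a pre-crossed module (the semidirect product `M ⋊ N` underlying the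
coproduct of `M` and `N` in the category of crossed `R`-modules). -/
theorem semidirectProduct_preCrossedModule
    {R : Type*} [CommRing R]
    {M : Type*} [NonUnitalCommRing M] [Module R M]
    {N : Type*} [NonUnitalCommRing N] [Module R N]
    (hactM : ∀ (r : R) (m m' : M), r • (m * m') = (r • m) * m')
    (hactN : ∀ (r : R) (n n' : N), r • (n * n') = (r • n) * n')
    (d₁ : M → R)
    (hadd₁ : ∀ m m' : M, d₁ (m + m') = d₁ m + d₁ m')
    (hmul₁ : ∀ m m' : M, d₁ (m * m') = d₁ m * d₁ m')
    (hCM1₁ : ∀ (r : R) (m : M), d₁ (r • m) = r * d₁ m)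
    (hCM2₁ : ∀ m m' : M, d₁ m • m' = m * m')
    (d₂ : N → R)
    (hadd₂ : ∀ n n' : N, d₂ (n + n') = d₂ n + d₂ n')
    (hmul₂ : ∀ n n' : N, d₂ (n * n') = d₂ n * d₂ n')
    (hCM1₂ : ∀ (r : R) (n : N), d₂ (r • n) = r * d₂ n)
    (hCM2₂ : ∀ n n' : N, d₂ n • n' = n * n')
    (mul : M × N → M × N → M × N)
    (hmul : ∀ x y : M × N,
      mul x y = (x.1 * y.1, d₁ x.1 • y.2 + d₁ y.1 • x.2 + x.2 * y.2))
    (δbar : M × N → R)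
    (hδbar : ∀ x : M × N, δbar x = d₁ x.1 + d₂ x.2) :
    -- `M × N` is a non-unital commutative ring:
    (∀ x y : M × N, mul x y = mul y x) ∧
    (∀ x y z : M × N, mul (mul x y) z = mul x (mul y z)) ∧
    (∀ x y z : M × N, mul x (y + z) = mul x y + mul x z) ∧
    (∀ x y z : M × N, mul (x + y) z = mul x z + mul y z) ∧
    -- compatibility of the `R`-action with the multiplication:
    (∀ (r : R) (x y : M × N), r • mul x y = mul (r • x) y) ∧
    -- `δ̄` is additive, multiplicative and satisfies (CM1):
    (∀ x y : M × N, δbar (x + y) = δbar x + δbar y) ∧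
    (∀ x y : M × N, δbar (mul x y) = δbar x * δbar y) ∧
    (∀ (r : R) (x : M × N), δbar (r • x) = r * δbar x) := by
  have hactN' : ∀ (r : R) (n n' : N), n * (r • n') = r • (n * n') := by
    intro r n n'
    rw [mul_comm, ← hactN, mul_comm]
  have hcomm : ∀ x y : M × N, mul x y = mul y x := by
    intro x y
    rw [hmul, hmul, mul_comm x.1, mul_comm x.2, add_comm (d₁ x.1 • y.2)]
  have hdist : ∀ x y z : M × N, mul x (y + z) = mul x y + mul x z := by
    intro x y z
    simp only [hmul, Prod.fst_add, Prod.snd_add, Prod.mk_add_mk, hadd₁, mul_add, smul_add,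
      add_smul]
    refine Prod.ext rfl ?_
    dsimp only
    abel
  refine ⟨hcomm, ?_, hdist, ?_, ?_, ?_, ?_, ?_⟩
  · intro x y z
    simp only [hmul]
    refine Prod.ext (mul_assoc _ _ _) ?_
    simp only [hmul₁, smul_add, mul_add, add_mul, ← hactN, hactN', smul_smul]
    simp only [mul_comm, mul_left_comm, mul_assoc]
    abel
  · intro x y z
    rw [hcomm, hdist, hcomm z x, hcomm z y]
  · intro r x y
    simp only [hmul, Prod.smul_fst, Prod.smul_snd, Prod.smul_mk, hCM1₁, smul_add, smul_smul,
      hactM, hactN, mul_comm]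
  · intro x y
    simp only [hδbar, Prod.fst_add, Prod.snd_add, hadd₁, hadd₂]
    ring
  · intro x y
    simp only [hδbar, hmul, hadd₂, hmul₁, hmul₂, hCM1₂]
    ring
  · intro r x
    simp only [hδbar, Prod.smul_fst, Prod.smul_snd, hCM1₁, hCM1₂]
    ring
end
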